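/- arXiv:quant-ph/0407049 — 3 statements merged into one kernel-verified Lean document; each statement's English description precedes it below -/
import Mathlib

section
/- Let d_A ≥ 3. The function mapping a unit vector φ ∈ C^{d_A} ⊗ C^{d_B} to the von Neumann entropy S(φ_A) of its reduced density matrix φ_A = Tr_B |φ⟩⟨φ| is Lipschitz with constant at most √8 · log₂ d_A with respect to the Euclidean norm. -/
open scoped BigOperators ComplexOrder
open Matrix

noncomputable section

namespace QIT

variable {n : Type*} [Fintype n] [DecidableEq n]

/-- Density matrix of a pure state given by a unit vector. -/
def pureDM (φ : EuclideanSpace ℂ n) : Matrix n n ℂ :=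
  Matrix.of fun i j => φ i * (starRingEnd ℂ) (φ j)

/-- A density matrix: positive semidefinite with unit trace. -/
def DensityMatrix (ρ : Matrix n n ℂ) : Prop := ρ.PosSemidef ∧ ρ.trace = 1

/-- Von Neumann entropy (base 2), via the eigenvalues. -/
def vNEntropy (ρ : Matrix n n ℂ) : ℝ :=
  if h : ρ.IsHermitian then ∑ i, -(h.eigenvalues i * Real.logb 2 (h.eigenvalues i)) else 0

/-- Trace norm of a Hermitian matrix, via eigenvalues. -/
def traceNorm (M : Matrix n n ℂ) : ℝ :=
  if h : M.IsHermitian then ∑ i, |h.eigenvalues i| else 0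

/-- Operator (spectral) norm. -/
def opNorm (M : Matrix n n ℂ) : ℝ := ‖Matrix.toEuclideanCLM (𝕜 := ℂ) M‖

/-- Apply a real function to a Hermitian matrix via the spectral theorem. -/
def hermApply (f : ℝ → ℝ) (M : Matrix n n ℂ) : Matrix n n ℂ :=
  if h : M.IsHermitian then
    (h.eigenvectorUnitary : Matrix n n ℂ) * Matrix.diagonal (fun i => (f (h.eigenvalues i) : ℂ)) *
      (h.eigenvectorUnitary : Matrix n n ℂ)ᴴ
  else 0

/-- Matrix base-2 logarithm of a Hermitian matrix. -/
def mlog2 : Matrix n n ℂ → Matrix n n ℂ := hermApply (Real.logb 2)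

/-- Matrix square root of a positive semidefinite matrix. -/
def msqrt : Matrix n n ℂ → Matrix n n ℂ := hermApply Real.sqrt

/-- Quantum relative entropy `D(ρ‖σ) = Tr ρ (log₂ ρ − log₂ σ)`. -/
def relEnt (ρ σ : Matrix n n ℂ) : ℝ := ((ρ * (mlog2 ρ - mlog2 σ)).trace).re

/-- Uhlmann fidelity `F(ρ,σ) = (Tr √(√ρ σ √ρ))²`. -/
def fidelity (ρ σ : Matrix n n ℂ) : ℝ := (((msqrt (msqrt ρ * σ * msqrt ρ)).trace).re) ^ 2

/-- A projector. -/
def Projector (P : Matrix n n ℂ) : Prop := P.IsHermitian ∧ P * P = P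

variable {dA dB : ℕ}

/-- Partial trace over the second factor. -/
def ptraceB (ρ : Matrix (Fin dA × Fin dB) (Fin dA × Fin dB) ℂ) : Matrix (Fin dA) (Fin dA) ℂ :=
  Matrix.of fun a a' => ∑ b, ρ (a, b) (a', b)

/-- Partial trace over the first factor. -/
def ptraceA (ρ : Matrix (Fin dA × Fin dB) (Fin dA × Fin dB) ℂ) : Matrix (Fin dB) (Fin dB) ℂ :=
  Matrix.of fun b b' => ∑ a, ρ (a, b) (a, b')

/-- Kronecker (tensor) product of operators on the two factors. -/
def kron (P : Matrix (Fin dA) (Fin dA) ℂ) (Q : Matrix (Fin dB) (Fin dB) ℂ) :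
    Matrix (Fin dA × Fin dB) (Fin dA × Fin dB) ℂ :=
  Matrix.of fun x y => P x.1 y.1 * Q x.2 y.2

/-- Partial transpose on the second factor. -/
def ptransposeB (ρ : Matrix (Fin dA × Fin dB) (Fin dA × Fin dB) ℂ) :
    Matrix (Fin dA × Fin dB) (Fin dA × Fin dB) ℂ :=
  Matrix.of fun x y => ρ (x.1, y.2) (y.1, x.2)

/-- Bipartite separability. -/
def Separable (ρ : Matrix (Fin dA × Fin dB) (Fin dA × Fin dB) ℂ) : Prop :=
  ∃ (m : ℕ) (p : Fin m → ℝ) (a : Fin m → Matrix (Fin dA) (Fin dA) ℂ)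
    (b : Fin m → Matrix (Fin dB) (Fin dB) ℂ),
    (∀ l, 0 ≤ p l) ∧ (∑ l, p l = 1) ∧
    (∀ l, (a l).PosSemidef ∧ (a l).trace = 1) ∧
    (∀ l, (b l).PosSemidef ∧ (b l).trace = 1) ∧
    ρ = ∑ l, (p l : ℂ) • kron (a l) (b l)

/-- Entanglement of formation. -/
def EoF (ρ : Matrix (Fin dA × Fin dB) (Fin dA × Fin dB) ℂ) : ℝ :=
  sInf { x : ℝ | ∃ (m : ℕ) (p : Fin m → ℝ) (φ : Fin m → EuclideanSpace ℂ (Fin dA × Fin dB)),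
    (∀ l, 0 ≤ p l) ∧ (∑ l, p l = 1) ∧ (∀ l, ‖φ l‖ = 1) ∧
    (ρ = ∑ l, (p l : ℂ) • pureDM (φ l)) ∧
    x = ∑ l, p l * vNEntropy (ptraceB (pureDM (φ l))) }

end QIT

/-!
Write `φ` as a coefficient matrix `M`, so that `φ_A = M * Mᴴ` and the Euclidean norm of `φ` is the
Frobenius norm of `M`. The diagonal of `(U * M) * (U * M)ᴴ` is the distribution of a measurement of
`φ_A` in the basis given by the unitary `U`, and its probabilities are the squared row norms of
`U * M`. By concavity of `-t log t` the Shannon entropy of this measurement is at least `S(φ_A)`,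
with equality in an eigenbasis. Taking for `U` an eigenbasis of `φ_A` bounds `S(ψ_A) - S(φ_A)` by
the difference of two Shannon entropies, regarded as functions of the amplitudes (the row norms),
and the amplitudes are `1`-Lipschitz in `M`.

It remains to bound the gradient of `x ↦ -∑ xᵢ² log xᵢ²` on the unit ball. Its squared norm is
`4 ∑ pᵢ (1 + log pᵢ)²` with `pᵢ = xᵢ²`, and `p (1 + log p)² ≤ (log d)² (p + 1 / d)` when
`log d ≥ 1`, so the sum is at most `8 (log d)²`.
-/

namespace QIT

open Real WithLp
open scoped Gradient Matrix.Norms.Frobenius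

section Scalar

lemma one_le_log_of_three_le {x : ℝ} (hx : 3 ≤ x) : 1 ≤ log x := by
  rw [le_log_iff_exp_le (by linarith)]
  linarith [exp_one_lt_three]

lemma sq_le_one_add_exp {z : ℝ} (hz : 0 ≤ z) : z ^ 2 ≤ 1 + exp z := by
  have taylor : 1 + z + z ^ 2 / 2 + z ^ 3 / 6 ≤ exp z := by
    simpa [Finset.sum_range_succ, Nat.factorial] using sum_le_exp_of_nonneg hz 4
  nlinarith [mul_nonneg hz (sq_nonneg (z - 3 / 2))]

lemma add_sub_one_sq_le_mul_one_add_exp {L z : ℝ} (hL : 1 ≤ L) (hz : -L ≤ z) :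
    (L + z - 1) ^ 2 ≤ L ^ 2 * (1 + exp z) := by
  rcases le_total z 1 with hz1 | hz1
  · calc (L + z - 1) ^ 2 ≤ L ^ 2 := sq_le_sq' (by linarith) (by linarith)
      _ ≤ L ^ 2 * (1 + exp z) := le_mul_of_one_le_right (sq_nonneg L) (by linarith [exp_pos z])
  · calc (L + z - 1) ^ 2 ≤ (L * z) ^ 2 := sq_le_sq' (by nlinarith) (by nlinarith)
      _ = L ^ 2 * z ^ 2 := mul_pow L z 2
      _ ≤ L ^ 2 * (1 + exp z) := by gcongr; exact sq_le_one_add_exp (by linarith)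

lemma mul_log_add_one_sq_le {L p : ℝ} (hL : 1 ≤ L) (hp0 : 0 ≤ p) (hp1 : p ≤ 1) :
    p * (log p + 1) ^ 2 ≤ L ^ 2 * (p + exp (-L)) := by
  rcases hp0.eq_or_lt with rfl | hp
  · rw [zero_mul]
    positivity
  have hexp : p * exp (-log p - L) = exp (-L) := by
    rw [sub_eq_add_neg, exp_add, exp_neg (log p), exp_log hp, mul_inv_cancel_left₀ hp.ne']
  calc p * (log p + 1) ^ 2 = p * (L + (-log p - L) - 1) ^ 2 := by ring
    _ ≤ p * (L ^ 2 * (1 + exp (-log p - L))) := by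
      gcongr
      exact add_sub_one_sq_le_mul_one_add_exp hL (by linarith [log_nonpos hp0 hp1])
    _ = L ^ 2 * (p + p * exp (-log p - L)) := by ring
    _ = L ^ 2 * (p + exp (-L)) := by rw [hexp]

lemma hasDerivAt_negMulLog_sq (x : ℝ) :
    HasDerivAt (fun y ↦ negMulLog (y ^ 2)) (4 * negMulLog x - 2 * x) x := by
  refine hasDerivAt_of_hasDerivAt_of_ne' (x := 0) (g := fun y ↦ 4 * negMulLog y - 2 * y)
    (fun y hy ↦ ?_) (by fun_prop) (by fun_prop) x
  refine (HasDerivAt.comp (h := (· ^ 2)) y (hasDerivAt_negMulLog (pow_ne_zero 2 hy))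
    (hasDerivAt_pow 2 y)).congr_deriv ?_
  simp only [log_pow, negMulLog]
  push_cast
  ring

end Scalar

section AmplitudeEntropy

variable {ι : Type*} [Fintype ι]

/-- The Shannon entropy, in nats, of the distribution `i ↦ x i ^ 2` with amplitudes `x`; the vector
`x` is not required to be normalized. In contrast to the entropy as a function of the probabilities,
it is continuously differentiable also where some `x i` vanishes. -/
def amplitudeEntropy (x : EuclideanSpace ℝ ι) : ℝ := ∑ i, negMulLog (x i ^ 2)

lemma hasGradientAt_amplitudeEntropy (x : EuclideanSpace ℝ ι) :
    HasGradientAt amplitudeEntropy (toLp 2 fun i ↦ 4 * negMulLog (x i) - 2 * x i) x := by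
  rw [hasGradientAt_iff_hasFDerivAt]
  refine (HasFDerivAt.fun_sum fun i _ ↦ (hasDerivAt_negMulLog_sq (x i)).comp_hasFDerivAt x
    (EuclideanSpace.proj i : EuclideanSpace ℝ ι →L[ℝ] ℝ).hasFDerivAt).congr_fderiv ?_
  ext y
  simp [PiLp.inner_apply, mul_comm]

lemma norm_gradient_amplitudeEntropy_sq_le {L : ℝ} (hL : 1 ≤ L) {x : EuclideanSpace ℝ ι}
    (hx : ‖x‖ ≤ 1) :
    ‖∇ amplitudeEntropy x‖ ^ 2 ≤ 4 * L ^ 2 * (‖x‖ ^ 2 + Fintype.card ι * exp (-L)) := by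
  have sq_le_one (i : ι) : x i ^ 2 ≤ 1 := by
    rw [sq_le_one_iff_abs_le_one]
    exact (PiLp.norm_apply_le x i).trans hx
  rw [(hasGradientAt_amplitudeEntropy x).gradient, EuclideanSpace.real_norm_sq_eq,
    EuclideanSpace.real_norm_sq_eq]
  calc ∑ i, (4 * negMulLog (x i) - 2 * x i) ^ 2
      = ∑ i, 4 * (x i ^ 2 * (log (x i ^ 2) + 1) ^ 2) := by
        refine Finset.sum_congr rfl fun i _ ↦ ?_
        rw [log_pow, negMulLog]
        push_cast
        ring
    _ ≤ ∑ i, 4 * (L ^ 2 * (x i ^ 2 + exp (-L))) := by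
        refine Finset.sum_le_sum fun i _ ↦ mul_le_mul_of_nonneg_left ?_ zero_le_four
        exact mul_log_add_one_sq_le hL (sq_nonneg _) (sq_le_one i)
    _ = 4 * L ^ 2 * (∑ i, x i ^ 2 + Fintype.card ι * exp (-L)) := by
        simp only [← Finset.mul_sum, Finset.sum_add_distrib, Finset.sum_const, Finset.card_univ,
          nsmul_eq_mul, mul_assoc]

lemma norm_gradient_amplitudeEntropy_le (hι : 3 ≤ Fintype.card ι) {x : EuclideanSpace ℝ ι}
    (hx : ‖x‖ ≤ 1) : ‖∇ amplitudeEntropy x‖ ≤ √8 * log (Fintype.card ι) := by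
  have hd : (3 : ℝ) ≤ Fintype.card ι := by exact_mod_cast hι
  have hexp : Fintype.card ι * exp (-log (Fintype.card ι)) = 1 := by
    rw [exp_neg, exp_log (by linarith), mul_inv_cancel₀ (by linarith)]
  refine le_of_sq_le_sq ?_ (by positivity)
  calc ‖∇ amplitudeEntropy x‖ ^ 2 ≤ 4 * log (Fintype.card ι) ^ 2 * (‖x‖ ^ 2 + 1) := by
        rw [← hexp]
        exact norm_gradient_amplitudeEntropy_sq_le (one_le_log_of_three_le hd) hx
    _ ≤ 4 * log (Fintype.card ι) ^ 2 * (1 ^ 2 + 1) := by gcongr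
    _ = (√8 * log (Fintype.card ι)) ^ 2 := by
        rw [mul_pow, sq_sqrt (by norm_num)]
        ring

lemma abs_amplitudeEntropy_sub_le (hι : 3 ≤ Fintype.card ι) {x y : EuclideanSpace ℝ ι}
    (hx : ‖x‖ ≤ 1) (hy : ‖y‖ ≤ 1) :
    |amplitudeEntropy x - amplitudeEntropy y| ≤ √8 * log (Fintype.card ι) * ‖x - y‖ := by
  refine (convex_closedBall 0 1).norm_image_sub_le_of_norm_hasFDerivWithin_le
    (fun z _ ↦ (hasGradientAt_amplitudeEntropy z).differentiableAt.hasGradientAt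
      |>.hasFDerivAt.hasFDerivWithinAt)
    (fun z hz ↦ ?_) (mem_closedBall_zero_iff.2 hy) (mem_closedBall_zero_iff.2 hx)
  rw [LinearIsometryEquiv.norm_map]
  exact norm_gradient_amplitudeEntropy_le hι (mem_closedBall_zero_iff.1 hz)

end AmplitudeEntropy

section Concavity

variable {𝕜 m : Type*} [RCLike 𝕜] [Fintype m] [DecidableEq m]

lemma sum_map_le_sum_map_mulVec_of_concaveOn {s : Set ℝ} {f : ℝ → ℝ} (hf : ConcaveOn ℝ s f)
    {D : Matrix m m ℝ} (hD : D ∈ doublyStochastic ℝ m) {x : m → ℝ} (hx : ∀ i, x i ∈ s) :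
    ∑ i, f (x i) ≤ ∑ i, f ((D *ᵥ x) i) := by
  calc ∑ j, f (x j) = ∑ j, (∑ i, D i j) * f (x j) := by
        simp only [sum_col_of_mem_doublyStochastic hD, one_mul]
    _ = ∑ i, ∑ j, D i j * f (x j) := by
        simp only [Finset.sum_mul]
        exact Finset.sum_comm
    _ ≤ ∑ i, f (∑ j, D i j * x j) := Finset.sum_le_sum fun i _ ↦
        hf.le_map_sum (fun j _ ↦ nonneg_of_mem_doublyStochastic hD)
          (sum_row_of_mem_doublyStochastic hD i) fun j _ ↦ hx j

lemma norm_sq_mem_doublyStochastic (U : unitaryGroup m 𝕜) :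
    (of fun i j ↦ ‖(U : Matrix m m 𝕜) i j‖ ^ 2) ∈ doublyStochastic ℝ m := by
  have row_sum (V : unitaryGroup m 𝕜) (i : m) : ∑ j, ‖(V : Matrix m m 𝕜) i j‖ ^ 2 = 1 := by
    have h := congr_fun₂ (Unitary.coe_mul_star_self V) i i
    simp only [mul_apply, Unitary.coe_star, star_apply, RCLike.star_def, RCLike.mul_conj,
      one_apply_eq] at h
    exact_mod_cast h
  refine mem_doublyStochastic_iff_sum.2 ⟨fun i j ↦ sq_nonneg _, row_sum U, fun j ↦ ?_⟩
  simpa using row_sum (star U) j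

lemma re_apply_self_eq_norm_sq_mulVec_eigenvalues {A : Matrix m m 𝕜} (hA : A.IsHermitian) (i : m) :
    RCLike.re (A i i) =
      ((of fun i j ↦ ‖(hA.eigenvectorUnitary : Matrix m m 𝕜) i j‖ ^ 2) *ᵥ hA.eigenvalues) i := by
  conv_lhs => rw [hA.spectral_theorem, Unitary.conjStarAlgAut_apply, mul_apply, map_sum]
  refine Finset.sum_congr rfl fun j _ ↦ ?_
  rw [mul_diagonal, star_apply, mul_right_comm, RCLike.star_def, RCLike.mul_conj,
    Function.comp_apply]
  norm_cast

lemma sum_map_eigenvalues_le_sum_map_re_diag {s : Set ℝ} {f : ℝ → ℝ} (hf : ConcaveOn ℝ s f)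
    {A : Matrix m m 𝕜} (hA : A.IsHermitian) (hs : ∀ i, hA.eigenvalues i ∈ s) :
    ∑ i, f (hA.eigenvalues i) ≤ ∑ i, f (RCLike.re (A i i)) := by
  simp only [re_apply_self_eq_norm_sq_mulVec_eigenvalues hA]
  exact sum_map_le_sum_map_mulVec_of_concaveOn hf (norm_sq_mem_doublyStochastic _) hs

end Concavity

section RowNorms

variable {𝕜 m n : Type*} [RCLike 𝕜] [Fintype n]

/-- The vector of Euclidean norms of the rows of `M`. For the coefficient matrix `M` of a bipartite
vector these are the amplitudes of a measurement of the first factor in the standard basis. -/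
def rowNorms (M : Matrix m n 𝕜) : EuclideanSpace ℝ m := toLp 2 fun i ↦ ‖toLp 2 (M i)‖

lemma mul_conjTranspose_apply_self (M : Matrix m n 𝕜) (i : m) :
    (M * Mᴴ) i i = ((rowNorms M i ^ 2 : ℝ) : 𝕜) := by
  simp [rowNorms, EuclideanSpace.norm_sq_eq, mul_apply, RCLike.mul_conj]

variable [Fintype m]

lemma norm_rowNorms (M : Matrix m n 𝕜) : ‖rowNorms M‖ = ‖M‖ := by
  rw [EuclideanSpace.norm_eq, frobenius_norm_def, sqrt_eq_rpow]
  simp [rowNorms, EuclideanSpace.norm_sq_eq]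

lemma norm_rowNorms_sub_le (M N : Matrix m n 𝕜) : ‖rowNorms M - rowNorms N‖ ≤ ‖M - N‖ := by
  rw [← norm_rowNorms (M - N)]
  refine le_of_sq_le_sq ?_ (norm_nonneg _)
  rw [EuclideanSpace.real_norm_sq_eq, EuclideanSpace.real_norm_sq_eq]
  refine Finset.sum_le_sum fun i _ ↦ sq_le_sq.2 ((abs_norm_sub_norm_le _ _).trans ?_)
  exact le_abs_self ‖toLp 2 ((M - N) i)‖

lemma frobenius_norm_sq_eq_trace (M : Matrix m n 𝕜) :
    ((‖M‖ ^ 2 : ℝ) : 𝕜) = (Mᴴ * M).trace := by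
  rw [trace_mul_comm, ← norm_rowNorms, EuclideanSpace.real_norm_sq_eq, RCLike.ofReal_sum]
  exact Finset.sum_congr rfl fun i _ ↦ (mul_conjTranspose_apply_self M i).symm

lemma frobenius_norm_unitary_mul [DecidableEq m] (U : unitaryGroup m 𝕜) (M : Matrix m n 𝕜) :
    ‖U.1 * M‖ = ‖M‖ := by
  have gram : (U.1 * M)ᴴ * (U.1 * M) = Mᴴ * M := by
    rw [conjTranspose_mul, Matrix.mul_assoc, ← Matrix.mul_assoc _ U.1,
      ← star_eq_conjTranspose U.1, Unitary.coe_star_mul_self, Matrix.one_mul]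
  refine (sq_eq_sq₀ (norm_nonneg _) (norm_nonneg _)).1 (RCLike.ofReal_injective (K := 𝕜) ?_)
  rw [frobenius_norm_sq_eq_trace, gram, frobenius_norm_sq_eq_trace]

lemma unitary_mul_mul_conjTranspose [DecidableEq m] (U : unitaryGroup m 𝕜)
    (M : Matrix m n 𝕜) :
    (U.1 * M) * (U.1 * M)ᴴ = Unitary.conjStarAlgAut 𝕜 _ U (M * Mᴴ) := by
  rw [Unitary.conjStarAlgAut_apply, conjTranspose_mul, star_eq_conjTranspose]
  simp only [Matrix.mul_assoc]

end RowNorms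

section VonNeumann

variable {m n : Type*} [Fintype m] [DecidableEq m] [Fintype n]

lemma vNEntropy_eq_sum_negMulLog_eigenvalues {A : Matrix m m ℂ} (hA : A.IsHermitian) :
    vNEntropy A = (∑ i, negMulLog (hA.eigenvalues i)) / log 2 := by
  rw [vNEntropy, dif_pos hA, Finset.sum_div]
  exact Finset.sum_congr rfl fun i _ ↦ by rw [negMulLog, logb]; ring

lemma vNEntropy_eq_of_charpoly_eq {A B : Matrix m m ℂ} (hA : A.IsHermitian) (hB : B.IsHermitian)
    (h : A.charpoly = B.charpoly) : vNEntropy A = vNEntropy B := by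
  rw [vNEntropy_eq_sum_negMulLog_eigenvalues hA, vNEntropy_eq_sum_negMulLog_eigenvalues hB,
    (hA.eigenvalues_eq_eigenvalues_iff hB).2 h]

lemma vNEntropy_unitary_mul (U : unitaryGroup m ℂ) (M : Matrix m n ℂ) :
    vNEntropy ((U.1 * M) * (U.1 * M)ᴴ) = vNEntropy (M * Mᴴ) := by
  refine vNEntropy_eq_of_charpoly_eq (isHermitian_mul_conjTranspose_self _)
    (isHermitian_mul_conjTranspose_self M) ?_
  rw [unitary_mul_mul_conjTranspose, Unitary.conjStarAlgAut_apply, charpoly_mul_comm,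
    ← Matrix.mul_assoc, Unitary.coe_star_mul_self, Matrix.one_mul]

lemma vNEntropy_mul_conjTranspose_le (M : Matrix m n ℂ) :
    vNEntropy (M * Mᴴ) ≤ amplitudeEntropy (rowNorms M) / log 2 := by
  have hM := posSemidef_self_mul_conjTranspose M
  have entropy_le_diag := sum_map_eigenvalues_le_sum_map_re_diag concaveOn_negMulLog hM.isHermitian
    hM.eigenvalues_nonneg
  simp only [mul_conjTranspose_apply_self, RCLike.ofReal_re] at entropy_le_diag
  rw [vNEntropy_eq_sum_negMulLog_eigenvalues hM.isHermitian]
  gcongr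
  exact entropy_le_diag

lemma exists_unitary_vNEntropy_eq_amplitudeEntropy (M : Matrix m n ℂ) :
    ∃ U : unitaryGroup m ℂ,
      vNEntropy (M * Mᴴ) = amplitudeEntropy (rowNorms (U.1 * M)) / log 2 := by
  have hM := isHermitian_mul_conjTranspose_self M
  refine ⟨star hM.eigenvectorUnitary, ?_⟩
  rw [vNEntropy_eq_sum_negMulLog_eigenvalues hM, amplitudeEntropy]
  congr! 3 with i
  have diag := mul_conjTranspose_apply_self ((star hM.eigenvectorUnitary).1 * M) i
  rw [unitary_mul_mul_conjTranspose, hM.conjStarAlgAut_star_eigenvectorUnitary,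
    diagonal_apply_eq] at diag
  exact RCLike.ofReal_injective diag

lemma vNEntropy_mul_conjTranspose_sub_le (hm : 3 ≤ Fintype.card m) {M N : Matrix m n ℂ}
    (hM : ‖M‖ ≤ 1) (hN : ‖N‖ ≤ 1) :
    vNEntropy (M * Mᴴ) - vNEntropy (N * Nᴴ) ≤ √8 * logb 2 (Fintype.card m) * ‖M - N‖ := by
  obtain ⟨U, hU⟩ := exists_unitary_vNEntropy_eq_amplitudeEntropy N
  have norm_le_one {K : Matrix m n ℂ} (hK : ‖K‖ ≤ 1) : ‖rowNorms (U.1 * K)‖ ≤ 1 := by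
    rwa [norm_rowNorms, frobenius_norm_unitary_mul]
  calc vNEntropy (M * Mᴴ) - vNEntropy (N * Nᴴ)
      ≤ amplitudeEntropy (rowNorms (U.1 * M)) / log 2
          - amplitudeEntropy (rowNorms (U.1 * N)) / log 2 := by
        rw [hU, ← vNEntropy_unitary_mul U M]
        gcongr
        exact vNEntropy_mul_conjTranspose_le _
    _ ≤ √8 * log (Fintype.card m)
          * ‖rowNorms (U.1 * M) - rowNorms (U.1 * N)‖ / log 2 := by
        rw [← sub_div]
        gcongr
        exact (le_abs_self _).trans
          (abs_amplitudeEntropy_sub_le hm (norm_le_one hM) (norm_le_one hN))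
    _ ≤ √8 * log (Fintype.card m) * ‖M - N‖ / log 2 := by
        rw [← frobenius_norm_unitary_mul U (M - N), Matrix.mul_sub]
        gcongr
        exact norm_rowNorms_sub_le _ _
    _ = √8 * logb 2 (Fintype.card m) * ‖M - N‖ := by
        rw [logb]
        ring

lemma abs_vNEntropy_mul_conjTranspose_sub_le (hm : 3 ≤ Fintype.card m) {M N : Matrix m n ℂ}
    (hM : ‖M‖ ≤ 1) (hN : ‖N‖ ≤ 1) :
    |vNEntropy (M * Mᴴ) - vNEntropy (N * Nᴴ)| ≤ √8 * logb 2 (Fintype.card m) * ‖M - N‖ := by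
  refine abs_sub_le_iff.2 ⟨vNEntropy_mul_conjTranspose_sub_le hm hM hN, ?_⟩
  rw [norm_sub_rev]
  exact vNEntropy_mul_conjTranspose_sub_le hm hN hM

end VonNeumann

section CoeffMatrix

variable {𝕜 m n : Type*} [RCLike 𝕜]

/-- The matrix of coefficients of a bipartite vector `φ`, rows indexed by the first factor. Then
`coeffMatrix φ * (coeffMatrix φ)ᴴ` is the reduced state `φ_A`. -/
def coeffMatrix (φ : EuclideanSpace 𝕜 (m × n)) : Matrix m n 𝕜 := of fun a b ↦ φ (a, b)

lemma coeffMatrix_sub (φ ψ : EuclideanSpace 𝕜 (m × n)) :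
    coeffMatrix (φ - ψ) = coeffMatrix φ - coeffMatrix ψ := rfl

lemma norm_coeffMatrix [Fintype m] [Fintype n] (φ : EuclideanSpace 𝕜 (m × n)) :
    ‖coeffMatrix φ‖ = ‖φ‖ := by
  rw [EuclideanSpace.norm_eq, frobenius_norm_def, sqrt_eq_rpow, Fintype.sum_prod_type]
  simp [coeffMatrix]

lemma ptraceB_pureDM {dA dB : ℕ} (φ : EuclideanSpace ℂ (Fin dA × Fin dB)) :
    ptraceB (pureDM φ) = coeffMatrix φ * (coeffMatrix φ)ᴴ := by
  ext a a'
  simp [ptraceB, pureDM, coeffMatrix, mul_apply]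

end CoeffMatrix

end QIT

open QIT in
theorem entanglement_entropy_lipschitz_general {m n : Type*} [Fintype m] [DecidableEq m]
    [Fintype n] (hm : 3 ≤ Fintype.card m) {φ ψ : EuclideanSpace ℂ (m × n)} (hφ : ‖φ‖ ≤ 1)
    (hψ : ‖ψ‖ ≤ 1) :
    |vNEntropy (coeffMatrix φ * (coeffMatrix φ)ᴴ) - vNEntropy (coeffMatrix ψ * (coeffMatrix ψ)ᴴ)|
      ≤ Real.sqrt 8 * Real.logb 2 (Fintype.card m) * ‖φ - ψ‖ := by
  rw [← norm_coeffMatrix] at hφ hψ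
  rw [← norm_coeffMatrix, coeffMatrix_sub]
  exact abs_vNEntropy_mul_conjTranspose_sub_le hm hφ hψ

theorem entanglement_entropy_lipschitz (dA dB : ℕ) (hA : 3 ≤ dA) :
    ∀ φ ψ : EuclideanSpace ℂ (Fin dA × Fin dB), ‖φ‖ = 1 → ‖ψ‖ = 1 →
      |QIT.vNEntropy (QIT.ptraceB (QIT.pureDM φ)) - QIT.vNEntropy (QIT.ptraceB (QIT.pureDM ψ))|
        ≤ Real.sqrt 8 * Real.logb 2 dA * ‖φ - ψ‖ := by
  intro φ ψ hφ hψ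
  simpa only [QIT.ptraceB_pureDM, Fintype.card_fin] using
    entanglement_entropy_lipschitz_general (by simpa using hA) hφ.le hψ.le

end
end

section
/- For 0 < ε < 1, the set of unit vectors in C^{d_A} ⊗ C^{d_B} whose Schmidt rank is at most k admits an ε-net (in trace norm on the associated pure states) of cardinality at most (10/ε)^{2k(d_A + d_B)}. -/
open scoped BigOperators ComplexOrder
open Matrix

noncomputable section

/-!
A vector of Schmidt rank at most `k` has the form `(U ⊗ 1) x`, where `U : ℂ^k → ℂ^dA` is a
contraction and `x ∈ ℂ^k ⊗ ℂ^dB` has the same norm. The pairs `(U, x)` live in the unit ball, for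
the maximum of the operator norm and the Euclidean norm, of a space of real dimension
`2k(dA + dB)`. A volume argument provides an `ε/4`-net of the set of those pairs in the ball for
which `(U ⊗ 1) x` is a unit vector; as the net lies inside this set, its image consists of unit
vectors and needs no renormalisation. The map `(U, x) ↦ (U ⊗ 1) x` is `2`-Lipschitz on the ball,
and for unit vectors the trace distance is at most twice the Euclidean one.
-/

namespace QIT

section Packing

open MeasureTheory Metric Module
open scoped NNReal

variable {E : Type*} [NormedAddCommGroup E] [NormedSpace ℝ E] [FiniteDimensional ℝ E]

lemma pairwiseDisjoint_closedBall_of_isSeparated {X : Type*} [PseudoMetricSpace X] {δ : ℝ≥0}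
    {s : Set X} (hs : IsSeparated δ s) :
    s.PairwiseDisjoint fun c ↦ closedBall c (δ / 2 : ℝ) := by
  intro c hc d hd hcd
  have hlt : (δ : ℝ) < dist c d := by
    have hedist : (δ : ENNReal) < edist c d := hs hc hd hcd
    rwa [edist_nndist, ENNReal.coe_lt_coe] at hedist
  exact closedBall_disjoint_closedBall (by linarith)

-- The balls of radius `δ / 2` about the points of `s` are disjoint and lie in a ball of radius
-- `R + δ / 2`, so the bound is a ratio of volumes.
lemma card_le_of_isSeparated {x : E} {R : ℝ} (hR : 0 ≤ R) {δ : ℝ≥0} (hδ : 0 < δ) {s : Finset E}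
    (hs : (s : Set E) ⊆ closedBall x R) (hsep : IsSeparated δ (s : Set E)) :
    (s.card : ℝ) ≤ (1 + 2 * R / δ) ^ finrank ℝ E := by
  borelize E
  let μ : Measure E := Measure.addHaar
  have hδ' : (0 : ℝ) < δ := hδ
  have hsub : ⋃ c ∈ s, closedBall c (δ / 2 : ℝ) ⊆ closedBall x (R + δ / 2) :=
    Set.iUnion₂_subset fun c hc ↦
      closedBall_subset_closedBall' (by linarith [mem_closedBall.1 (hs hc)])
  have hvol : s.card * ((δ / 2 : ℝ) ^ finrank ℝ E * μ.real (ball 0 1))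
      ≤ (R + δ / 2) ^ finrank ℝ E * μ.real (ball 0 1) :=
    calc s.card * ((δ / 2 : ℝ) ^ finrank ℝ E * μ.real (ball 0 1))
        = ∑ c ∈ s, μ.real (closedBall c (δ / 2 : ℝ)) := by
          simp [μ.addHaar_real_closedBall _ (half_pos hδ').le]
      _ = μ.real (⋃ c ∈ s, closedBall c (δ / 2 : ℝ)) :=
          (measureReal_biUnion_finset (pairwiseDisjoint_closedBall_of_isSeparated hsep)
            (fun _ _ ↦ measurableSet_closedBall) (fun _ _ ↦ measure_closedBall_lt_top.ne)).symm
      _ ≤ μ.real (closedBall x (R + δ / 2)) := measureReal_mono hsub measure_closedBall_lt_top.ne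
      _ = (R + δ / 2) ^ finrank ℝ E * μ.real (ball 0 1) :=
          μ.addHaar_real_closedBall _ (by positivity)
  have hunit : 0 < μ.real (ball 0 1) :=
    ENNReal.toReal_pos (measure_ball_pos μ _ one_pos).ne' measure_ball_lt_top.ne
  have hratio : 1 + 2 * R / δ = (R + δ / 2) / (δ / 2) := by field_simp; ring
  rw [hratio, div_pow, le_div_iff₀ (by positivity)]
  exact le_of_mul_le_mul_right (by simpa only [mul_assoc] using hvol) hunit

lemma packingNumber_ne_top_of_totallyBounded {X : Type*} [PseudoEMetricSpace X] {δ : ℝ≥0}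
    (hδ : 0 < δ) {S : Set X} (hS : TotallyBounded S) : packingNumber δ S ≠ ⊤ := by
  obtain ⟨C, -, hCfin, hC⟩ := exists_finite_isCover_of_totallyBounded (half_pos hδ).ne' hS
  refine ne_top_of_le_ne_top (Set.encard_ne_top_iff.2 hCfin) ?_
  calc packingNumber δ S = packingNumber (2 * (δ / 2)) S := by rw [mul_div_cancel₀ _ two_ne_zero]
    _ ≤ externalCoveringNumber (δ / 2) S := packingNumber_two_mul_le_externalCoveringNumber _ _
    _ ≤ C.encard := hC.externalCoveringNumber_le_encard

lemma exists_finset_net_of_subset_closedBall {x : E} {R : ℝ} (hR : 0 ≤ R) {δ : ℝ} (hδ : 0 < δ)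
    {S : Set E} (hS : S ⊆ closedBall x R) :
    ∃ N : Finset E, (N.card : ℝ) ≤ (1 + 2 * R / δ) ^ finrank ℝ E ∧ (N : Set E) ⊆ S ∧
      ∀ y ∈ S, ∃ z ∈ N, dist y z ≤ δ := by
  lift δ to ℝ≥0 using hδ.le
  have hpack : packingNumber δ S ≠ ⊤ :=
    packingNumber_ne_top_of_totallyBounded hδ
      ((isCompact_closedBall x R).totallyBounded.subset hS)
  have hfin : (maximalSeparatedSet δ S).Finite := by
    rwa [← Set.encard_ne_top_iff, encard_maximalSeparatedSet hpack]
  refine ⟨hfin.toFinset, card_le_of_isSeparated (x := x) hR hδ ?_ ?_, ?_, fun y hy ↦ ?_⟩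
  · simpa using maximalSeparatedSet_subset.trans hS
  · simpa using isSeparated_maximalSeparatedSet
  · simpa using maximalSeparatedSet_subset
  · obtain ⟨z, hz, hyz⟩ := Set.mem_iUnion₂.1
      ((isCover_maximalSeparatedSet hpack).subset_iUnion_closedBall hy)
    exact ⟨z, hfin.mem_toFinset.2 hz, hyz⟩

end Packing

section TraceNorm

variable {n : Type*}

lemma pureDM_eq_vecMulVec (φ : EuclideanSpace ℂ n) : pureDM φ = vecMulVec φ (star φ) := rfl

lemma isHermitian_pureDM (φ : EuclideanSpace ℂ n) : (pureDM φ).IsHermitian := by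
  rw [pureDM_eq_vecMulVec, IsHermitian, conjTranspose_vecMulVec, star_star]

variable [Fintype n]

lemma sum_abs_norm_inner_sq_sub_norm_inner_sq_le {𝕜 E : Type*} [RCLike 𝕜] [NormedAddCommGroup E]
    [InnerProductSpace 𝕜 E] (e : OrthonormalBasis n 𝕜 E) (φ ψ : E) :
    ∑ i, |‖inner 𝕜 (e i) φ‖ ^ 2 - ‖inner 𝕜 (e i) ψ‖ ^ 2| ≤ (‖φ‖ + ‖ψ‖) * ‖φ - ψ‖ := by
  have cauchy_schwarz (χ : E) :
      ∑ i, ‖inner 𝕜 (e i) χ‖ * ‖inner 𝕜 (e i) (φ - ψ)‖ ≤ ‖χ‖ * ‖φ - ψ‖ := by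
    simpa [e.sum_sq_norm_inner_right] using Real.sum_mul_le_sqrt_mul_sqrt Finset.univ
      (fun i ↦ ‖inner 𝕜 (e i) χ‖) (fun i ↦ ‖inner 𝕜 (e i) (φ - ψ)‖)
  calc ∑ i, |‖inner 𝕜 (e i) φ‖ ^ 2 - ‖inner 𝕜 (e i) ψ‖ ^ 2|
      ≤ ∑ i, (‖inner 𝕜 (e i) φ‖ + ‖inner 𝕜 (e i) ψ‖) * ‖inner 𝕜 (e i) (φ - ψ)‖ := by
        gcongr with i
        rw [sq_sub_sq, abs_mul, abs_of_nonneg (by positivity), inner_sub_right]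
        gcongr
        exact abs_norm_sub_norm_le _ _
    _ ≤ (‖φ‖ + ‖ψ‖) * ‖φ - ψ‖ := by
        simp only [add_mul, Finset.sum_add_distrib]
        exact add_le_add (cauchy_schwarz φ) (cauchy_schwarz ψ)

lemma star_dotProduct_pureDM_mulVec (φ x : EuclideanSpace ℂ n) :
    star (x : n → ℂ) ⬝ᵥ (pureDM φ *ᵥ x) = ((‖inner ℂ x φ‖ ^ 2 : ℝ) : ℂ) := by
  have star_dotProduct_eq_inner (y z : EuclideanSpace ℂ n) :
      star (y : n → ℂ) ⬝ᵥ (z : n → ℂ) = inner ℂ y z := by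
    rw [EuclideanSpace.inner_eq_star_dotProduct, dotProduct_comm]
  rw [pureDM_eq_vecMulVec, vecMulVec_mulVec, dotProduct_smul, op_smul_eq_smul, smul_eq_mul,
    star_dotProduct_eq_inner, star_dotProduct_eq_inner, ← inner_conj_symm φ x, RCLike.conj_mul]
  norm_cast

lemma traceNorm_pureDM_sub_le [DecidableEq n] (φ ψ : EuclideanSpace ℂ n) :
    traceNorm (pureDM φ - pureDM ψ) ≤ (‖φ‖ + ‖ψ‖) * ‖φ - ψ‖ := by
  have hH : (pureDM φ - pureDM ψ).IsHermitian := (isHermitian_pureDM φ).sub (isHermitian_pureDM ψ)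
  have eigenvalues_eq (i : n) : hH.eigenvalues i
      = ‖inner ℂ (hH.eigenvectorBasis i) φ‖ ^ 2 - ‖inner ℂ (hH.eigenvectorBasis i) ψ‖ ^ 2 := by
    rw [hH.eigenvalues_eq, sub_mulVec, dotProduct_sub, star_dotProduct_pureDM_mulVec,
      star_dotProduct_pureDM_mulVec, ← Complex.ofReal_sub]
    exact Complex.ofReal_re _
  simpa only [traceNorm, dif_pos hH, eigenvalues_eq] using
    sum_abs_norm_inner_sq_sub_norm_inner_sq_le hH.eigenvectorBasis φ ψ

end TraceNorm

section Contraction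

open Module

variable {𝕜 E F : Type*} [RCLike 𝕜] [NormedAddCommGroup E] [InnerProductSpace 𝕜 E]
  [NormedAddCommGroup F] [InnerProductSpace 𝕜 F] [FiniteDimensional 𝕜 F]

lemma nonempty_linearIsometry_of_finrank_le [FiniteDimensional 𝕜 E]
    (h : finrank 𝕜 E ≤ finrank 𝕜 F) : Nonempty (E →ₗᵢ[𝕜] F) := by
  let e := stdOrthonormalBasis 𝕜 E
  let f := stdOrthonormalBasis 𝕜 F
  let T : E →ₗ[𝕜] F := e.toBasis.constr 𝕜 (f ∘ Fin.castLE h)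
  have hT : T ∘ e.toBasis = f ∘ Fin.castLE h := funext (e.toBasis.constr_basis 𝕜 _)
  refine ⟨T.isometryOfOrthonormal (v := e.toBasis) (by simp) ?_⟩
  rw [hT]
  exact f.orthonormal.comp _ (Fin.castLE_injective h)

lemma exists_contraction_norm_preserving_lift (W : Submodule 𝕜 E) [FiniteDimensional 𝕜 W]
    (h : finrank 𝕜 W ≤ finrank 𝕜 F) :
    ∃ U : F →L[𝕜] E, ‖U‖ ≤ 1 ∧ ∀ w ∈ W, ∃ y, U y = w ∧ ‖y‖ = ‖w‖ := by
  have : CompleteSpace F := FiniteDimensional.complete 𝕜 F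
  have : CompleteSpace W := FiniteDimensional.complete 𝕜 W
  obtain ⟨J⟩ := nonempty_linearIsometry_of_finrank_le h
  let J' := J.toContinuousLinearMap
  refine ⟨W.subtypeL ∘L J'.adjoint, ?_, fun w hw ↦ ⟨J ⟨w, hw⟩, ?_, J.norm_map _⟩⟩
  · refine (ContinuousLinearMap.opNorm_comp_le _ _).trans (mul_le_one₀ W.norm_subtypeL_le
      (norm_nonneg _) ?_)
    rw [LinearIsometryEquiv.norm_map]
    exact J.norm_toContinuousLinearMap_le
  · have hadj : J'.adjoint ∘L J' = 1 := J'.norm_map_iff_adjoint_comp_self.1 J.norm_map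
    exact congrArg Subtype.val (DFunLike.congr_fun hadj ⟨w, hw⟩)

end Contraction

section SchmidtRank

open Module

variable {𝕜 l m n : Type*} [RCLike 𝕜]

/-- The `j`-th column of the coefficient matrix of a vector of `𝕜^m ⊗ 𝕜^n`. The columns
span the support of the reduced state on the first factor. -/
def column (v : EuclideanSpace 𝕜 (m × n)) (j : n) : EuclideanSpace 𝕜 m :=
  WithLp.toLp 2 fun i ↦ v (i, j)

/-- The Schmidt rank of a vector of `𝕜^m ⊗ 𝕜^n`, encoded as the column rank of its coefficient
matrix rather than as the rank of the reduced state. -/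
def schmidtRank (v : EuclideanSpace 𝕜 (m × n)) : ℕ :=
  finrank 𝕜 (Submodule.span 𝕜 (Set.range (column v)))

lemma rank_ptraceB_pureDM {dA dB : ℕ} (v : EuclideanSpace ℂ (Fin dA × Fin dB)) :
    (ptraceB (pureDM v)).rank = schmidtRank v := by
  let M : Matrix (Fin dA) (Fin dB) ℂ := Matrix.of fun a b ↦ v (a, b)
  let toPi := WithLp.linearEquiv 2 ℂ (Fin dA → ℂ)
  have hM : ptraceB (pureDM v) = M * Mᴴ := rfl
  have hspan : Submodule.span ℂ (Set.range M.col)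
      = (Submodule.span ℂ (Set.range (column v))).map toPi.toLinearMap := by
    rw [Submodule.map_span, ← Set.range_comp]
    rfl
  rw [hM, rank_self_mul_conjTranspose, rank_eq_finrank_span_cols, hspan]
  exact toPi.finrank_map_eq _

/-- The vector `(U ⊗ 1) x`: the operator `U` acts on the first tensor factor. With
`U` starting from a space of dimension `k`, these are the vectors of Schmidt rank at most `k`. -/
def applyFst (U : EuclideanSpace 𝕜 l →L[𝕜] EuclideanSpace 𝕜 m) (x : EuclideanSpace 𝕜 (l × n)) :
    EuclideanSpace 𝕜 (m × n) :=
  WithLp.toLp 2 fun p ↦ U (column x p.2) p.1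

lemma column_applyFst (U : EuclideanSpace 𝕜 l →L[𝕜] EuclideanSpace 𝕜 m)
    (x : EuclideanSpace 𝕜 (l × n)) (j : n) : column (applyFst U x) j = U (column x j) := rfl

lemma schmidtRank_applyFst_le [Fintype l] (U : EuclideanSpace 𝕜 l →L[𝕜] EuclideanSpace 𝕜 m)
    (x : EuclideanSpace 𝕜 (l × n)) : schmidtRank (applyFst U x) ≤ Fintype.card l := by
  have hrange : Submodule.span 𝕜 (Set.range (column (applyFst U x))) ≤ U.toLinearMap.range := by
    rw [Submodule.span_le]
    rintro _ ⟨j, rfl⟩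
    exact ⟨column x j, rfl⟩
  calc schmidtRank (applyFst U x) ≤ finrank 𝕜 U.toLinearMap.range := Submodule.finrank_mono hrange
    _ ≤ finrank 𝕜 (EuclideanSpace 𝕜 l) := LinearMap.finrank_range_le _
    _ = Fintype.card l := finrank_euclideanSpace

variable [Fintype m]

lemma applyFst_sub_applyFst (U V : EuclideanSpace 𝕜 l →L[𝕜] EuclideanSpace 𝕜 m)
    (x y : EuclideanSpace 𝕜 (l × n)) :
    applyFst U x - applyFst V y = applyFst (U - V) x + applyFst V (x - y) := by
  have column_sub (j : n) : column (x - y) j = column x j - column y j := rfl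
  ext p
  simp [applyFst, column_sub]

variable [Fintype n]

lemma norm_sq_eq_sum_norm_column_sq (v : EuclideanSpace 𝕜 (m × n)) :
    ‖v‖ ^ 2 = ∑ j, ‖column v j‖ ^ 2 := by
  simp only [EuclideanSpace.norm_sq_eq, column, Fintype.sum_prod_type_right]

variable [Fintype l]

lemma norm_applyFst_le (U : EuclideanSpace 𝕜 l →L[𝕜] EuclideanSpace 𝕜 m)
    (x : EuclideanSpace 𝕜 (l × n)) : ‖applyFst U x‖ ≤ ‖U‖ * ‖x‖ := by
  refine (sq_le_sq₀ (norm_nonneg _) (by positivity)).1 ?_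
  rw [mul_pow, norm_sq_eq_sum_norm_column_sq, norm_sq_eq_sum_norm_column_sq, Finset.mul_sum]
  gcongr with j
  rw [column_applyFst, ← mul_pow]
  gcongr
  exact U.le_opNorm _

lemma norm_applyFst_sub_applyFst_le {U V : EuclideanSpace 𝕜 l →L[𝕜] EuclideanSpace 𝕜 m}
    {x y : EuclideanSpace 𝕜 (l × n)} (hx : ‖x‖ ≤ 1) (hV : ‖V‖ ≤ 1) :
    ‖applyFst U x - applyFst V y‖ ≤ ‖U - V‖ + ‖x - y‖ :=
  calc ‖applyFst U x - applyFst V y‖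
      ≤ ‖applyFst (U - V) x‖ + ‖applyFst V (x - y)‖ := by
        rw [applyFst_sub_applyFst]
        exact norm_add_le _ _
    _ ≤ ‖U - V‖ * ‖x‖ + ‖V‖ * ‖x - y‖ := add_le_add (norm_applyFst_le _ _) (norm_applyFst_le _ _)
    _ ≤ ‖U - V‖ + ‖x - y‖ :=
        add_le_add (mul_le_of_le_one_right (norm_nonneg _) hx)
          (mul_le_of_le_one_left (norm_nonneg _) hV)

lemma exists_eq_applyFst_of_schmidtRank_le {v : EuclideanSpace 𝕜 (m × n)}
    (hv : schmidtRank v ≤ Fintype.card l) :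
    ∃ (U : EuclideanSpace 𝕜 l →L[𝕜] EuclideanSpace 𝕜 m) (x : EuclideanSpace 𝕜 (l × n)),
      ‖U‖ ≤ 1 ∧ ‖x‖ = ‖v‖ ∧ applyFst U x = v := by
  obtain ⟨U, hU, hlift⟩ := exists_contraction_norm_preserving_lift (F := EuclideanSpace 𝕜 l)
    (Submodule.span 𝕜 (Set.range (column v))) (hv.trans_eq finrank_euclideanSpace.symm)
  choose y hy hnorm using fun j ↦ hlift (column v j) (Submodule.subset_span ⟨j, rfl⟩)
  let x : EuclideanSpace 𝕜 (l × n) := WithLp.toLp 2 fun p ↦ y p.2 p.1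
  have hx (j : n) : column x j = y j := rfl
  refine ⟨U, x, hU, ?_, ?_⟩
  · rw [← sq_eq_sq₀ (norm_nonneg _) (norm_nonneg _), norm_sq_eq_sum_norm_column_sq,
      norm_sq_eq_sum_norm_column_sq]
    simp only [hx, hnorm]
  · ext p
    exact congrArg (· p.1) (hy p.2)

lemma finrank_real_clm_prod_euclideanSpace :
    finrank ℝ ((EuclideanSpace 𝕜 l →L[𝕜] EuclideanSpace 𝕜 m) × EuclideanSpace 𝕜 (l × n))
      = finrank ℝ 𝕜 * (Fintype.card l * (Fintype.card m + Fintype.card n)) := by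
  let e : (EuclideanSpace 𝕜 l →ₗ[𝕜] EuclideanSpace 𝕜 m) ≃ₗ[𝕜] _ := LinearMap.toContinuousLinearMap
  rw [← finrank_mul_finrank ℝ 𝕜, finrank_prod, ← e.finrank_eq, finrank_linearMap,
    finrank_euclideanSpace, finrank_euclideanSpace, finrank_euclideanSpace, Fintype.card_prod,
    ← mul_add]

variable (𝕜 m n)

lemma exists_finset_net_schmidtRank_le (k : ℕ) {δ : ℝ} (hδ : 0 < δ) :
    ∃ N : Finset (EuclideanSpace 𝕜 (m × n)),
      (N.card : ℝ) ≤ (1 + 4 / δ) ^ (finrank ℝ 𝕜 * (k * (Fintype.card m + Fintype.card n))) ∧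
      (∀ ψ ∈ N, ‖ψ‖ = 1 ∧ schmidtRank ψ ≤ k) ∧
      ∀ φ : EuclideanSpace 𝕜 (m × n), ‖φ‖ = 1 → schmidtRank φ ≤ k → ∃ ψ ∈ N, ‖φ - ψ‖ ≤ δ := by
  classical
  let P := (EuclideanSpace 𝕜 (Fin k) →L[𝕜] EuclideanSpace 𝕜 m) × EuclideanSpace 𝕜 (Fin k × n)
  have : FiniteDimensional ℝ P := FiniteDimensional.trans ℝ 𝕜 P
  let S : Set P := {p | ‖p‖ ≤ 1 ∧ ‖applyFst p.1 p.2‖ = 1}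
  have hS : S ⊆ Metric.closedBall 0 1 := fun p hp ↦ mem_closedBall_zero_iff.2 hp.1
  obtain ⟨N, hcard, hNS, hcover⟩ :=
    exists_finset_net_of_subset_closedBall zero_le_one (half_pos hδ) hS
  refine ⟨N.image fun p ↦ applyFst p.1 p.2, ?_, ?_, fun φ hφ hrank ↦ ?_⟩
  · rw [finrank_real_clm_prod_euclideanSpace, Fintype.card_fin,
      show 2 * 1 / (δ / 2) = 4 / δ by field_simp; norm_num] at hcard
    exact (Nat.cast_le.2 Finset.card_image_le).trans hcard
  · simp only [Finset.forall_mem_image]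
    exact fun p hp ↦ ⟨(hNS hp).2, by simpa using schmidtRank_applyFst_le p.1 p.2⟩
  · obtain ⟨U, x, hU, hx, rfl⟩ :=
      exists_eq_applyFst_of_schmidtRank_le (l := Fin k) (by simpa using hrank)
    have hx1 : ‖x‖ ≤ 1 := (hx.trans hφ).le
    obtain ⟨⟨V, y⟩, hVy, hdist⟩ := hcover (U, x) ⟨max_le hU hx1, hφ⟩
    refine ⟨applyFst V y, Finset.mem_image_of_mem _ hVy, ?_⟩
    rw [dist_eq_norm] at hdist
    have hV : ‖V‖ ≤ 1 := (norm_fst_le (V, y)).trans (hNS hVy).1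
    have hUV : ‖U - V‖ ≤ δ / 2 := (norm_fst_le _).trans hdist
    have hxy : ‖x - y‖ ≤ δ / 2 := (norm_snd_le _).trans hdist
    linarith [norm_applyFst_sub_applyFst_le (U := U) (y := y) hx1 hV]

end SchmidtRank

end QIT

theorem exists_schmidt_rank_net_general (dA dB k : ℕ) (ε : ℝ) (hε : 0 < ε) :
    ∃ N : Finset (EuclideanSpace ℂ (Fin dA × Fin dB)),
      (N.card : ℝ) ≤ (1 + 8 / ε) ^ (2 * k * (dA + dB)) ∧
      (∀ v ∈ N, ‖v‖ = 1 ∧ (QIT.ptraceB (QIT.pureDM v)).rank ≤ k) ∧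
      ∀ φ : EuclideanSpace ℂ (Fin dA × Fin dB), ‖φ‖ = 1 →
        (QIT.ptraceB (QIT.pureDM φ)).rank ≤ k →
        ∃ ψ ∈ N, QIT.traceNorm (QIT.pureDM φ - QIT.pureDM ψ) ≤ ε := by
  simp only [QIT.rank_ptraceB_pureDM]
  obtain ⟨N, hcard, hN, hcover⟩ :=
    QIT.exists_finset_net_schmidtRank_le ℂ (Fin dA) (Fin dB) k (half_pos hε)
  refine ⟨N, ?_, hN, fun φ hφ hrank ↦ ?_⟩
  · rwa [Complex.finrank_real_complex, Fintype.card_fin, Fintype.card_fin, ← mul_assoc,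
      show 4 / (ε / 2) = 8 / ε by field_simp; norm_num] at hcard
  · obtain ⟨ψ, hψ, hdist⟩ := hcover φ hφ hrank
    refine ⟨ψ, hψ, (QIT.traceNorm_pureDM_sub_le φ ψ).trans ?_⟩
    rw [hφ, (hN ψ hψ).1]
    linarith

theorem exists_schmidt_rank_net (dA dB k : ℕ) (ε : ℝ) (hε0 : 0 < ε) (hε1 : ε < 1) :
    ∃ N : Finset (EuclideanSpace ℂ (Fin dA × Fin dB)),
      (N.card : ℝ) ≤ (10 / ε) ^ (2 * k * (dA + dB)) ∧
      (∀ v ∈ N, ‖v‖ = 1 ∧ (QIT.ptraceB (QIT.pureDM v)).rank ≤ k) ∧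
      ∀ φ : EuclideanSpace ℂ (Fin dA × Fin dB), ‖φ‖ = 1 →
        (QIT.ptraceB (QIT.pureDM φ)).rank ≤ k →
        ∃ ψ ∈ N, QIT.traceNorm (QIT.pureDM φ - QIT.pureDM ψ) ≤ ε := by
  obtain ⟨N, hcard, hN⟩ := exists_schmidt_rank_net_general dA dB k ε hε0
  have hbase : 1 + 8 / ε ≤ 10 / ε := by rw [one_add_div hε0.ne']; gcongr; linarith
  exact ⟨N, hcard.trans (by gcongr), hN⟩

end
end

section
/- Let σ be a density matrix on C² ⊗ C² (i.e., a two-qubit state). If ‖σ − I/4‖_∞ ≤ 1/8, then σ is separable. -/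
open scoped BigOperators ComplexOrder
open Matrix

noncomputable section

/-!
Write `σ` in `2 × 2` block form. In the ball of radius `r = c / 2` around `c • 1`, the diagonal
blocks of `σ - r • 1` are positive, so it remains to show that `1 ⊗ 1 + E₀₁ ⊗ X + E₁₀ ⊗ Xᴴ` is
separable when `r • X` is the off-diagonal block of `D = σ - c • 1`. If `X` is unitary, this follows
by diagonalizing `X`, since `1 + z • E₀₁ + conj z • E₁₀` is positive for `‖z‖ = 1`. In general,
`H = r⁻¹ • D` is a self-adjoint contraction, so it is the average of the two unitaries
`H ± I • √(1 - H²)`. Hence, for the unitary `S` swapping the two blocks, `S * H` is also an average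
of two unitaries, and its lower right block is `X`.
-/

namespace QIT

open scoped Kronecker MatrixOrder Matrix.Norms.L2Operator

section CStarAlgebra

variable {A : Type*} [CStarAlgebra A]

lemma cfc_eq_sum_cfc_single {a : A} [IsStarNormal a] (hfin : (spectrum ℂ a).Finite) (f : ℂ → ℂ) :
    cfc f a = ∑ z ∈ hfin.toFinset, f z • cfc (Pi.single z 1 : ℂ → ℂ) a := by
  have hcont (g : ℂ → ℂ) : ContinuousOn g (spectrum ℂ a) := hfin.continuousOn g
  calc cfc f a = cfc (∑ z ∈ hfin.toFinset, f z • (Pi.single z 1 : ℂ → ℂ)) a := by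
        refine cfc_congr fun w hw => ?_
        simp [Finset.sum_apply, Pi.single_apply, hw]
    _ = ∑ z ∈ hfin.toFinset, cfc (f z • (Pi.single z 1 : ℂ → ℂ)) a :=
        cfc_sum _ a _ fun _ _ => hcont _
    _ = ∑ z ∈ hfin.toFinset, f z • cfc (Pi.single z 1 : ℂ → ℂ) a :=
        Finset.sum_congr rfl fun z _ => cfc_smul (f z) _ a (hcont _)

lemma cfc_single_nonneg [PartialOrder A] [StarOrderedRing A] (a : A) (z : ℂ) :
    0 ≤ cfc (Pi.single z 1 : ℂ → ℂ) a :=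
  cfc_nonneg fun w _ => (Pi.single_nonneg.2 zero_le_one : (0 : ℂ → ℂ) ≤ Pi.single z 1) w

lemma exists_unitary_mul_eq_midpoint {u a : A} (hu : u ∈ unitary A) (ha : IsSelfAdjoint a)
    (hnorm : ‖a‖ ≤ 1) : ∃ v ∈ unitary A, ∃ w ∈ unitary A, u * a = midpoint ℝ v w := by
  let _ := CStarAlgebra.spectralOrder A
  let _ := CStarAlgebra.spectralOrderedRing A
  let v := selfAdjoint.unitarySelfAddISMul ⟨a, ha⟩ hnorm
  refine ⟨u * v, mul_mem hu v.2, u * star (v : A), mul_mem hu (star v).2, ?_⟩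
  have hv : a = midpoint ℝ (v : A) (star (v : A)) := by
    rw [midpoint_eq_smul_add, invOf_eq_inv, ← realPart_apply_coe]
    exact congrArg Subtype.val (selfAdjoint.realPart_unitarySelfAddISMul ⟨a, ha⟩ hnorm).symm
  conv_lhs => rw [hv]
  rw [midpoint_eq_smul_add, midpoint_eq_smul_add, mul_smul_comm, mul_add]

end CStarAlgebra

lemma posSemidef_add_smul_one_of_norm_le {n : Type*} [Fintype n] [DecidableEq n]
    {D : Matrix n n ℂ} (hD : D.IsHermitian) {r : ℝ} (hr : ‖D‖ ≤ r) : (D + r • 1).PosSemidef := by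
  rw [← Matrix.nonneg_iff_posSemidef, ← neg_le_iff_add_nonneg]
  calc -(r • (1 : Matrix n n ℂ)) ≤ -algebraMap ℝ (Matrix n n ℂ) ‖D‖ := by
        rw [← Algebra.algebraMap_eq_smul_one]
        exact neg_le_neg (algebraMap_mono _ hr)
    _ ≤ D := IsSelfAdjoint.neg_algebraMap_norm_le_self hD

lemma eq_sum_single_kronecker_submatrix {n : Type*} {M : Matrix (Fin 2 × n) (Fin 2 × n) ℂ}
    (hM : M.IsHermitian) :
    M = Matrix.single 0 0 1 ⊗ₖ M.submatrix (Prod.mk 0) (Prod.mk 0) +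
      Matrix.single 1 1 1 ⊗ₖ M.submatrix (Prod.mk 1) (Prod.mk 1) +
      (Matrix.single 0 1 1 ⊗ₖ M.submatrix (Prod.mk 0) (Prod.mk 1) +
      Matrix.single 1 0 1 ⊗ₖ (M.submatrix (Prod.mk 0) (Prod.mk 1))ᴴ) := by
  ext ⟨i, j⟩ ⟨k, l⟩
  fin_cases i <;> fin_cases k <;> simp [hM.apply]

lemma permMatrix_mem_unitary {n : Type*} [Fintype n] [DecidableEq n] (e : Equiv.Perm n) :
    e.permMatrix ℂ ∈ unitary (Matrix n n ℂ) := by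
  rw [Unitary.mem_iff, Matrix.star_eq_conjTranspose, Matrix.conjTranspose_permMatrix,
    ← Matrix.permMatrix_mul, ← Matrix.permMatrix_mul, mul_inv_cancel, inv_mul_cancel,
    Matrix.permMatrix_one]
  exact ⟨rfl, rfl⟩

section SepCone

variable {m n : Type*} [Fintype m] [Fintype n]

lemma exists_smul_densityMatrix {a : Matrix n n ℂ} (ha : a.PosSemidef) (ha0 : a ≠ 0) :
    ∃ t : ℝ, 0 ≤ t ∧ ∃ a' : Matrix n n ℂ, DensityMatrix a' ∧ a = t • a' := by
  obtain ⟨t, ht, htr⟩ : ∃ t : ℝ, 0 ≤ t ∧ (t : ℂ) = a.trace :=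
    RCLike.nonneg_iff_exists_ofReal.1 ha.trace_nonneg
  have ht0 : t ≠ 0 := by
    rintro rfl
    exact ha0 (ha.trace_eq_zero_iff.1 (by simp [← htr]))
  refine ⟨t, ht, t⁻¹ • a, ⟨ha.smul (inv_nonneg.2 ht), ?_⟩, (smul_inv_smul₀ ht0 a).symm⟩
  rw [Matrix.trace_smul, ← htr, Complex.real_smul, ← Complex.ofReal_mul, inv_mul_cancel₀ ht0,
    Complex.ofReal_one]

variable (m n) in
/-- The cone of unnormalized separable operators on a bipartite system, generated by the product
states. -/
def sepCone : PointedCone ℝ (Matrix (m × n) (m × n) ℂ) :=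
  PointedCone.hull ℝ {ρ | ∃ a b, DensityMatrix a ∧ DensityMatrix b ∧ ρ = a ⊗ₖ b}

lemma kronecker_mem_sepCone {a : Matrix m m ℂ} {b : Matrix n n ℂ} (ha : a.PosSemidef)
    (hb : b.PosSemidef) : a ⊗ₖ b ∈ sepCone m n := by
  rcases eq_or_ne a 0 with rfl | ha0
  · simp
  rcases eq_or_ne b 0 with rfl | hb0
  · simp
  obtain ⟨s, hs, a, ha', rfl⟩ := exists_smul_densityMatrix ha ha0
  obtain ⟨t, ht, b, hb', rfl⟩ := exists_smul_densityMatrix hb hb0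
  rw [Matrix.smul_kronecker, Matrix.kronecker_smul]
  exact (sepCone m n).smul_mem hs <| (sepCone m n).smul_mem ht <|
    PointedCone.subset_hull ⟨a, b, ha', hb', rfl⟩

lemma submatrix_mem_sepCone {l : Type*} [Fintype l] {ρ : Matrix (m × n) (m × n) ℂ}
    (hρ : ρ ∈ sepCone m n) (f : l → n) :
    ρ.submatrix (Prod.map id f) (Prod.map id f) ∈ sepCone m l := by
  induction hρ using Submodule.span_induction with
  | mem ρ hρ =>
    obtain ⟨a, b, ha, hb, rfl⟩ := hρ
    exact kronecker_mem_sepCone ha.1 (hb.1.submatrix f)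
  | zero => exact zero_mem _
  | add ρ τ _ _ hρ hτ => exact add_mem hρ hτ
  | smul t ρ _ hρ => exact Submodule.smul_mem _ t hρ

lemma separable_of_mem_sepCone {dA dB : ℕ} {ρ : Matrix (Fin dA × Fin dB) (Fin dA × Fin dB) ℂ}
    (hρ : ρ ∈ sepCone (Fin dA) (Fin dB)) (htr : ρ.trace = 1) : Separable ρ := by
  obtain ⟨k, p, g, rfl⟩ := Submodule.mem_span_set'.1 hρ
  choose a b ha hb hg using fun l => (g l).2
  refine ⟨k, fun l => p l, a, b, fun l => (p l).2, ?_, ha, hb, ?_⟩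
  · have hsum : ∑ l, (p l).1 • (g l).1.trace = 1 := by
      rw [← htr, Matrix.trace_sum]
      exact Finset.sum_congr rfl fun l _ => (Matrix.trace_smul _ _).symm
    simp only [hg, Matrix.trace_kronecker, (ha _).2, (hb _).2, mul_one, Complex.real_smul] at hsum
    exact_mod_cast hsum
  · refine Finset.sum_congr rfl fun l _ => ?_
    rw [hg l]
    exact (Complex.coe_smul _ _).symm

end SepCone

section BlockToeplitz

variable {n : Type*} [DecidableEq n]

/-- The block matrix `[[1, X], [Xᴴ, 1]]`, as an operator on the tensor product of a qubit with a
second system. -/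
def blockToeplitz (X : Matrix n n ℂ) : Matrix (Fin 2 × n) (Fin 2 × n) ℂ :=
  1 ⊗ₖ 1 + Matrix.single 0 1 1 ⊗ₖ X + Matrix.single 1 0 1 ⊗ₖ Xᴴ

lemma blockToeplitz_midpoint (X Y : Matrix n n ℂ) :
    blockToeplitz (midpoint ℝ X Y) = midpoint ℝ (blockToeplitz X) (blockToeplitz Y) := by
  simp only [midpoint_eq_smul_add, blockToeplitz, Matrix.conjTranspose_smul,
    Matrix.conjTranspose_add, Matrix.kronecker_smul, Matrix.kronecker_add, star_trivial,
    invOf_eq_inv]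
  module

lemma blockToeplitz_submatrix {l : Type*} [DecidableEq l] (X : Matrix n n ℂ) {f : l → n}
    (hf : Function.Injective f) :
    blockToeplitz (X.submatrix f f) =
      (blockToeplitz X).submatrix (Prod.map id f) (Prod.map id f) := by
  rw [blockToeplitz, ← Matrix.submatrix_one f hf]
  rfl

lemma blockToeplitz_sum_smul {ι : Type*} {s : Finset ι} {z : ι → ℂ} {P : ι → Matrix n n ℂ}
    (hP : ∀ i ∈ s, (P i).IsHermitian) (hone : ∑ i ∈ s, P i = 1) :
    blockToeplitz (∑ i ∈ s, z i • P i) =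
      ∑ i ∈ s, (1 + Matrix.single 0 1 (z i) + Matrix.single 1 0 (star (z i))) ⊗ₖ P i := by
  have hstar : (∑ i ∈ s, z i • P i)ᴴ = ∑ i ∈ s, star (z i) • P i := by
    rw [Matrix.conjTranspose_sum]
    exact Finset.sum_congr rfl fun i hi => by rw [Matrix.conjTranspose_smul, (hP i hi).eq]
  have hsum (A : Matrix (Fin 2) (Fin 2) ℂ) (Q : ι → Matrix n n ℂ) :
      A ⊗ₖ ∑ i ∈ s, Q i = ∑ i ∈ s, A ⊗ₖ Q i := by
    ext
    simp [Matrix.sum_apply, Finset.mul_sum]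
  rw [blockToeplitz, hstar, ← hone, hsum, hsum, hsum, ← Finset.sum_add_distrib,
    ← Finset.sum_add_distrib]
  refine Finset.sum_congr rfl fun i _ => ?_
  rw [Matrix.add_kronecker, Matrix.add_kronecker]
  simp only [Matrix.kronecker_smul, ← Matrix.smul_kronecker, Matrix.smul_single, smul_eq_mul,
    mul_one]

lemma posSemidef_one_add_single_add_single {z : ℂ} (hz : ‖z‖ = 1) :
    (1 + Matrix.single 0 1 z + Matrix.single 1 0 (star z) :
      Matrix (Fin 2) (Fin 2) ℂ).PosSemidef := by
  have hzz : z * starRingEnd ℂ z = 1 := by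
    rw [Complex.mul_conj', hz, Complex.ofReal_one, one_pow]
  convert Matrix.posSemidef_vecMulVec_self_star ![z, 1]
  ext i j
  fin_cases i <;> fin_cases j <;> simp [Matrix.vecMulVec_apply, hzz]

variable [Fintype n]

lemma blockToeplitz_mem_sepCone_of_mem_unitary {U : Matrix n n ℂ}
    (hU : U ∈ unitary (Matrix n n ℂ)) : blockToeplitz U ∈ sepCone (Fin 2) n := by
  have : IsStarNormal U := isStarNormal_of_mem_unitary hU
  have hfin := U.finite_spectrum
  let P (z : ℂ) : Matrix n n ℂ := cfc (Pi.single z 1 : ℂ → ℂ) U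
  have hP (z : ℂ) : (P z).PosSemidef := (cfc_single_nonneg U z).posSemidef
  have hone : 1 = ∑ z ∈ hfin.toFinset, P z := by
    simpa [cfc_one ℂ U] using cfc_eq_sum_cfc_single hfin (1 : ℂ → ℂ)
  have hUsum : U = ∑ z ∈ hfin.toFinset, z • P z := by
    simpa [cfc_id ℂ U] using cfc_eq_sum_cfc_single hfin (id : ℂ → ℂ)
  rw [hUsum, blockToeplitz_sum_smul (fun z _ => (hP z).1) hone.symm]
  refine sum_mem fun z hz => kronecker_mem_sepCone (posSemidef_one_add_single_add_single ?_) (hP z)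
  exact spectrum.norm_eq_one_of_unitary hU (hfin.mem_toFinset.1 hz)

lemma blockToeplitz_mul_mem_sepCone {U H : Matrix n n ℂ} (hU : U ∈ unitary (Matrix n n ℂ))
    (hH : H.IsHermitian) (hnorm : ‖H‖ ≤ 1) : blockToeplitz (U * H) ∈ sepCone (Fin 2) n := by
  obtain ⟨V, hV, W, hW, hmid⟩ := exists_unitary_mul_eq_midpoint hU hH hnorm
  rw [hmid, blockToeplitz_midpoint]
  exact (sepCone (Fin 2) n).convex.midpoint_mem (blockToeplitz_mem_sepCone_of_mem_unitary hV)
    (blockToeplitz_mem_sepCone_of_mem_unitary hW)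

lemma blockToeplitz_submatrix_mem_sepCone {H : Matrix (Fin 2 × n) (Fin 2 × n) ℂ}
    (hH : H.IsHermitian) (hnorm : ‖H‖ ≤ 1) :
    blockToeplitz (H.submatrix (Prod.mk 0) (Prod.mk 1)) ∈ sepCone (Fin 2) n := by
  let swapQubit : Equiv.Perm (Fin 2 × n) := (Equiv.swap 0 1).prodCongr (Equiv.refl n)
  have hblock : H.submatrix (Prod.mk 0) (Prod.mk 1) =
      (swapQubit.permMatrix ℂ * H).submatrix (Prod.mk 1) (Prod.mk 1) := by
    rw [PEquiv.toMatrix_toPEquiv_mul, Matrix.submatrix_submatrix]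
    rfl
  rw [hblock, blockToeplitz_submatrix _ (Prod.mk_right_injective 1)]
  exact submatrix_mem_sepCone
    (blockToeplitz_mul_mem_sepCone (permMatrix_mem_unitary swapQubit) hH hnorm) _

lemma two_smul_one_add_mem_sepCone {H : Matrix (Fin 2 × n) (Fin 2 × n) ℂ} (hH : H.IsHermitian)
    (hnorm : ‖H‖ ≤ 1) : (2 : ℝ) • 1 + H ∈ sepCone (Fin 2) n := by
  let P := H + (1 : ℝ) • 1
  have hP : P.PosSemidef := posSemidef_add_smul_one_of_norm_le hH hnorm
  have hPH : P.submatrix (Prod.mk 0) (Prod.mk 1) = H.submatrix (Prod.mk 0) (Prod.mk 1) := by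
    ext i j
    simp [P]
  have hdiag (i : Fin 2) : Matrix.single i i 1 ⊗ₖ P.submatrix (Prod.mk i) (Prod.mk i) ∈
      sepCone (Fin 2) n :=
    kronecker_mem_sepCone
      (Matrix.diagonal_single i (1 : ℂ) ▸ .diagonal (Pi.single_nonneg.2 zero_le_one))
      (hP.submatrix _)
  have hdecomp : (2 : ℝ) • 1 + H =
      Matrix.single 0 0 1 ⊗ₖ P.submatrix (Prod.mk 0) (Prod.mk 0) +
      Matrix.single 1 1 1 ⊗ₖ P.submatrix (Prod.mk 1) (Prod.mk 1) +
      blockToeplitz (H.submatrix (Prod.mk 0) (Prod.mk 1)) := by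
    calc (2 : ℝ) • 1 + H = P + 1 := by module
      _ = _ := by
        conv_lhs => rw [eq_sum_single_kronecker_submatrix hP.1, hPH]
        rw [blockToeplitz, Matrix.one_kronecker_one]
        abel
  rw [hdecomp]
  exact add_mem (add_mem (hdiag 0) (hdiag 1)) (blockToeplitz_submatrix_mem_sepCone hH hnorm)

lemma mem_sepCone_of_norm_sub_smul_one_le {σ : Matrix (Fin 2 × n) (Fin 2 × n) ℂ}
    (hσ : σ.IsHermitian) {c : ℝ} (hnorm : ‖σ - c • 1‖ ≤ c / 2) : σ ∈ sepCone (Fin 2) n := by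
  have hc : 0 ≤ c / 2 := (norm_nonneg _).trans hnorm
  rcases hc.eq_or_lt with hc0 | hc0
  · obtain rfl : c = 0 := by linarith
    obtain rfl : σ = 0 := by simpa using hnorm
    exact zero_mem _
  let H := (c / 2)⁻¹ • (σ - c • 1)
  have hH : H.IsHermitian :=
    (IsSelfAdjoint.all (c / 2)⁻¹).smul (hσ.isSelfAdjoint.sub ((IsSelfAdjoint.all c).smul (.one _)))
  have hHnorm : ‖H‖ ≤ 1 := by
    rw [norm_smul, norm_inv, Real.norm_of_nonneg hc]
    exact (inv_mul_le_one₀ hc0).2 hnorm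
  have hσH : σ = (c / 2) • ((2 : ℝ) • 1 + H) := by
    rw [smul_add, smul_inv_smul₀ hc0.ne']
    module
  rw [hσH]
  exact (sepCone (Fin 2) n).smul_mem hc (two_smul_one_add_mem_sepCone hH hHnorm)

end BlockToeplitz

end QIT

theorem two_qubit_separability_ball_general {n : ℕ}
    {σ : Matrix (Fin 2 × Fin n) (Fin 2 × Fin n) ℂ} (hσ : σ.IsHermitian) (htr : σ.trace = 1) {c : ℝ}
    (h : QIT.opNorm (σ - (c : ℂ) • 1) ≤ c / 2) : QIT.Separable σ :=
  QIT.separable_of_mem_sepCone (QIT.mem_sepCone_of_norm_sub_smul_one_le hσ h) htr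

theorem two_qubit_separability_ball
    (σ : Matrix (Fin 2 × Fin 2) (Fin 2 × Fin 2) ℂ) (hσ : QIT.DensityMatrix σ)
    (h : QIT.opNorm (σ - ((1 / 4 : ℝ) : ℂ) • 1) ≤ 1 / 8) :
    QIT.Separable σ :=
  two_qubit_separability_ball_general hσ.1.1 hσ.2 (h.trans_eq (by norm_num))

end
end
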